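/- (Growth lemma for the Moser recursion) Let κ ∈ (1,2] and γ > 0, and let (I_ν)_{ν≥0} be a sequence of nonnegative reals satisfying I_{ν+1} ≤ 4·64^ν γ (1 + I_ν^κ) for all ν ∈ ℕ. Set L = 4γ + 64 and define b₀ = 0, b_{ν+1} = κ b_ν + 2κ + ν. Then I_ν ≤ L^{b_ν} (1 + I₀^{κ^ν}) for all ν ∈ ℕ. -/

import Mathlib

open Set

theorem moser_aux (κ : ℝ) (h1 : 1 < κ) (h2 : κ ≤ 2) (x : ℝ) (hx : 0 ≤ x) :
    (1 + x) ^ κ ≤ 4 * (1 + x ^ κ) := by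
  have h4 : (2:ℝ) ^ κ ≤ 4 := by
    calc (2:ℝ) ^ κ ≤ 2 ^ (2:ℝ) := Real.rpow_le_rpow_of_exponent_le (by norm_num) h2
      _ = 4 := by norm_num
  have hxk : 0 ≤ x ^ κ := Real.rpow_nonneg hx _
  rcases le_total x 1 with h | h
  · have : (1 + x) ^ κ ≤ 2 ^ κ :=
      Real.rpow_le_rpow (by linarith) (by linarith) (by linarith)
    linarith
  · have : (1 + x) ^ κ ≤ (2 * x) ^ κ :=
      Real.rpow_le_rpow (by linarith) (by linarith) (by linarith)
    rw [Real.mul_rpow (by norm_num) hx] at this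
    nlinarith

/-- **Growth lemma for the Moser recursion.** Let `κ ∈ (1,2]`, `γ > 0`, and let `(I_ν)` be a
sequence of nonnegative reals with `I_{ν+1} ≤ 4·64^ν γ (1 + I_ν^κ)`. With `L = 4γ + 64` and
`b₀ = 0`, `b_{ν+1} = κb_ν + 2κ + ν`, one has `I_ν ≤ L^{b_ν} (1 + I₀^{κ^ν})` for all `ν`. -/
theorem moser_recursion_growth_lemma
    (κ : ℝ) (hκ : κ ∈ Ioc (1:ℝ) 2) (γ : ℝ) (hγ : 0 < γ)
    (I : ℕ → ℝ) (hI : ∀ ν : ℕ, 0 ≤ I ν)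
    (hrec : ∀ ν : ℕ, I (ν + 1) ≤ 4 * 64 ^ ν * γ * (1 + I ν ^ κ))
    (L : ℝ) (hL : L = 4 * γ + 64)
    (b : ℕ → ℝ) (hb0 : b 0 = 0) (hb : ∀ ν : ℕ, b (ν + 1) = κ * b ν + 2 * κ + ν) :
    ∀ ν : ℕ, I ν ≤ L ^ b ν * (1 + I 0 ^ (κ ^ ν)) := by
  obtain ⟨h1, h2⟩ := hκ
  have hL64 : 64 ≤ L := by linarith
  have hL1 : 1 ≤ L := by linarith
  have hL0 : 0 < L := by linarith
  have hbn : ∀ ν, 0 ≤ b ν := by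
    intro ν
    induction ν with
    | zero => rw [hb0]
    | succ n ih => rw [hb]; positivity
  intro ν
  induction ν with
  | zero =>
    rw [hb0]; simp
  | succ n ih =>
    have hI0 := hI 0
    have key := moser_aux κ h1 h2 (I 0 ^ (κ ^ n)) (Real.rpow_nonneg hI0 _)
    rw [← Real.rpow_mul hI0, ← pow_succ] at key
    have hy : 0 ≤ I 0 ^ (κ ^ (n + 1)) := Real.rpow_nonneg hI0 _
    have hA : 1 ≤ L ^ (κ * b n) :=
      Real.one_le_rpow hL1 (mul_nonneg (by linarith) (hbn n))
    have hp : I n ^ κ ≤ L ^ (κ * b n) * (1 + I 0 ^ (κ ^ n)) ^ κ := by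
      calc I n ^ κ ≤ (L ^ b n * (1 + I 0 ^ (κ ^ n))) ^ κ :=
            Real.rpow_le_rpow (hI n) ih (by linarith)
        _ = _ := by
          rw [Real.mul_rpow (by positivity) (by positivity), ← Real.rpow_mul hL0.le,
            mul_comm (b n)]
    have hLk : 20 * γ ≤ L ^ (2 * κ) := by
      calc 20 * γ ≤ L ^ (2:ℕ) := by nlinarith
        _ = L ^ (2:ℝ) := by norm_cast
        _ ≤ _ := Real.rpow_le_rpow_of_exponent_le hL1 (by linarith)
    have hLn : (64:ℝ) ^ n ≤ L ^ n := pow_le_pow_left₀ (by norm_num) hL64 n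
    rw [hb, Real.rpow_add hL0, Real.rpow_add hL0, Real.rpow_natCast]
    generalize I 0 ^ (κ ^ (n + 1)) = y at *
    generalize L ^ (κ * b n) = A at *
    have hq : 1 + I n ^ κ ≤ 5 * (A * (1 + y)) := by
      have := mul_le_mul_of_nonneg_left key (by linarith : 0 ≤ A)
      nlinarith [mul_nonneg (by linarith : 0 ≤ A) hy]
    have hAy : 0 ≤ A * (1 + y) := mul_nonneg (by linarith) (by linarith)
    calc I (n + 1) ≤ 4 * 64 ^ n * γ * (1 + I n ^ κ) := hrec n
      _ ≤ 4 * 64 ^ n * γ * (5 * (A * (1 + y))) :=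
          mul_le_mul_of_nonneg_left hq (by positivity)
      _ = ((20 * γ) * 64 ^ n) * (A * (1 + y)) := by ring
      _ ≤ (L ^ (2 * κ) * L ^ n) * (A * (1 + y)) :=
          mul_le_mul_of_nonneg_right
            (mul_le_mul hLk hLn (by positivity) (by positivity)) hAy
      _ = A * L ^ (2 * κ) * L ^ n * (1 + y) := by ring
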